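/- Let k, m be positive integers and let i, j be integers with 0 ≤ j ≤ i ≤ k and i ≥ 1. Then the element x_i^{m+k−j} + x_i^{m+k−i}·e_{i−j}(x_1,…,x_{i−1}) of R(k,m) lies in the ZMod 2-linear span of the basis monomials x_1^{n_1}·…·x_k^{n_k} (with 0 ≤ n_t ≤ m+k−t for all t) that satisfy n_i < m+k−i and n_ℓ = 0 for every ℓ > i. Here e_d denotes the d-th elementary symmetric polynomial in the indicated variables (e_0 = 1). -/

import Mathlib

/-!
Put `x = x_i`, `N = m + k - i`, and let `A` be the subalgebra generated by `x_1, …, x_{i-1}`. The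
generating series `∑ h_d T^d` and `∑ (-1)^d e_d T^d` of a list are mutually inverse, so
`(∑ h_u(x_1, …, x_i) T^u) (∑ (-1)^v e_v(x_1, …, x_{i-1}) T^v) = 1 / (1 - x T)`, that is,
`x^{N+r} = ∑_{u+v=N+r} (-1)^v h_u(x_1, …, x_i) e_v(x_1, …, x_{i-1})`.

The recursion `h_{d+1}(x_1, …, x_i) = h_{d+1}(x_1, …, x_{i-1}) + x h_d(x_1, …, x_i)` spreads the
relations: `h_u(x_1, …, x_i) = 0` for all `u > N`. Over `A`, the polynomial `h_u(x_1, …, x_i)` is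
monic of degree `u` in `x`; so modulo combinations `∑_{c<N} x^c a_c` with `a_c ∈ A`, only the
leading term of `u = N` survives, and it contributes `(-1)^r x^N e_r(x_1, …, x_{i-1})`.

Finally, `A` is spanned by the basis monomials in `x_1, …, x_{i-1}`: adjoining the variables one
at a time, `h_{N+1}(x_1, …, x_i) = 0` is a monic equation of degree `N + 1` for `x` over `A`.
-/

open scoped TensorProduct

/-- Complete homogeneous symmetric polynomial of degree `d` in a list of elements
of a commutative (semi)ring: `h_d(l)`. -/
noncomputable def completeHomog {R : Type*} [CommSemiring R] : List R → ℕ → R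
  | [], 0 => 1
  | [], _ + 1 => 0
  | x :: l, d => ∑ t ∈ Finset.range (d + 1), x ^ t * completeHomog l (d - t)

/-- Elementary symmetric polynomial of degree `d` in a list of elements: `e_d(l)`. -/
noncomputable def elemSymm {R : Type*} [CommSemiring R] : List R → ℕ → R
  | _, 0 => 1
  | [], _ + 1 => 0
  | x :: l, d + 1 => elemSymm l (d + 1) + x * elemSymm l d

/-- The ideal of `(ZMod 2)[x_1, …, x_k]` generated by the complete homogeneous
symmetric polynomials `h_{m+i}(x_1, …, x_{k+1-i})` for `1 ≤ i ≤ k`. -/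
noncomputable def flagIdeal (k m : ℕ) : Ideal (MvPolynomial (Fin k) (ZMod 2)) :=
  Ideal.span { p | ∃ i : ℕ, 1 ≤ i ∧ i ≤ k ∧
    p = completeHomog (((List.finRange k).take (k + 1 - i)).map MvPolynomial.X) (m + i) }

/-- `R(k,m)`, the quotient of `(ZMod 2)[x_1, …, x_k]` by `flagIdeal k m`;
this is the mod-2 cohomology ring of the real flag manifold `F(1^k, m)`. -/
abbrev FlagRing (k m : ℕ) : Type :=
  MvPolynomial (Fin k) (ZMod 2) ⧸ flagIdeal k m

/-- The image of the variable `x_{j+1}` in `R(k,m)` (`j` is 0-indexed). -/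
noncomputable def xGen (k m : ℕ) (j : Fin k) : FlagRing k m :=
  Ideal.Quotient.mk (flagIdeal k m) (MvPolynomial.X j)

/-- The zero-divisor `z_{j+1} = x_{j+1} ⊗ 1 + 1 ⊗ x_{j+1}` in `R(k,m) ⊗ R(k,m)`. -/
noncomputable def zGen (k m : ℕ) (j : Fin k) :
    FlagRing k m ⊗[ZMod 2] FlagRing k m :=
  xGen k m j ⊗ₜ 1 + 1 ⊗ₜ xGen k m j

/-- `x_{i+1,j+1}` in the `s`-fold tensor power `R(k,m)^{⊗ s}`: the element having
`x_{j+1}` in the `(i+1)`-st tensor factor and `1` elsewhere (`i`, `j` 0-indexed). -/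
noncomputable def xT (k m s : ℕ) (i : Fin s) (j : Fin k) :
    ⨂[ZMod 2] _ : Fin s, FlagRing k m :=
  PiTensorProduct.tprod (ZMod 2) (fun t => if t = i then xGen k m j else 1)

/-- The `s`-th zero-divisor `z_{i+1,j+1} = x_{1,j+1} + x_{i+1,j+1}` in `R(k,m)^{⊗ s}`. -/
noncomputable def zT (k m s : ℕ) (hs : 0 < s) (i : Fin s) (j : Fin k) :
    ⨂[ZMod 2] _ : Fin s, FlagRing k m :=
  xT k m s ⟨0, hs⟩ j + xT k m s i j

section SymmetricFunctions

section CommSemiring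

variable {R S : Type*} [CommSemiring R] [CommSemiring S]

lemma completeHomog_zero (l : List R) : completeHomog l 0 = 1 := by
  induction l with
  | nil => rfl
  | cons x l ih => simp [completeHomog, ih]

lemma completeHomog_cons_succ (x : R) (l : List R) (d : ℕ) :
    completeHomog (x :: l) (d + 1) =
      completeHomog l (d + 1) + x * completeHomog (x :: l) d := by
  simp only [completeHomog]
  rw [Finset.sum_range_succ', Finset.mul_sum, add_comm]
  simp [pow_succ', mul_assoc]

lemma map_completeHomog (f : R →+* S) (l : List R) (d : ℕ) :
    f (completeHomog l d) = completeHomog (l.map f) d := by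
  induction l generalizing d with
  | nil => cases d <;> simp [completeHomog]
  | cons x l ih => simp [completeHomog, ih]

lemma completeHomog_mem {σ : Type*} [SetLike σ R] [SubsemiringClass σ R] {A : σ} {l : List R}
    (hl : ∀ y ∈ l, y ∈ A) (d : ℕ) : completeHomog l d ∈ A := by
  induction l generalizing d with
  | nil => cases d <;> simp [completeHomog, one_mem, zero_mem]
  | cons x l ih =>
    rw [List.forall_mem_cons] at hl
    exact sum_mem fun t _ => mul_mem (pow_mem hl.1 t) (ih hl.2 (d - t))

lemma elemSymm_mem {σ : Type*} [SetLike σ R] [SubsemiringClass σ R] {A : σ} {l : List R}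
    (hl : ∀ y ∈ l, y ∈ A) (d : ℕ) : elemSymm l d ∈ A := by
  induction l generalizing d with
  | nil => cases d <;> simp [elemSymm, one_mem, zero_mem]
  | cons x l ih =>
    rw [List.forall_mem_cons] at hl
    cases d with
    | zero => exact one_mem A
    | succ d => exact add_mem (ih hl.2 (d + 1)) (mul_mem hl.1 (ih hl.2 d))

lemma completeHomog_cons_eq_zero_of_le {x : R} {l : List R} {N : ℕ}
    (hN : completeHomog (x :: l) N = 0) (hl : ∀ d, N < d → completeHomog l d = 0) {d : ℕ}
    (hd : N ≤ d) : completeHomog (x :: l) d = 0 := by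
  induction d, hd using Nat.le_induction with
  | base => exact hN
  | succ d hd ih => rw [completeHomog_cons_succ, hl (d + 1) (by omega), ih, mul_zero, add_zero]

lemma mk_completeHomog (l : List R) :
    PowerSeries.mk (completeHomog l) = (l.map fun x => PowerSeries.mk (x ^ ·)).prod := by
  induction l with
  | nil => ext n; cases n <;> simp [completeHomog, PowerSeries.coeff_one]
  | cons x l ih =>
    rw [List.map_cons, List.prod_cons, ← ih]
    ext n
    simp [completeHomog, PowerSeries.coeff_mul,
      Finset.Nat.sum_antidiagonal_eq_sum_range_succ (fun a b => x ^ a * completeHomog l b)]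

lemma completeHomog_eq_of_perm {l₁ l₂ : List R} (h : l₁.Perm l₂) :
    completeHomog l₁ = completeHomog l₂ := by
  have hmk : PowerSeries.mk (completeHomog l₁) = PowerSeries.mk (completeHomog l₂) := by
    rw [mk_completeHomog, mk_completeHomog, (h.map _).prod_eq]
  ext d
  simpa using congrArg (PowerSeries.coeff d) hmk

end CommSemiring

section CommRing

variable {R : Type*} [CommRing R]

lemma mk_pow_mul_one_sub (x : R) :
    PowerSeries.mk (x ^ ·) * (1 - PowerSeries.C x * PowerSeries.X) = 1 := by
  simpa [PowerSeries.rescale_mk] using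
    congrArg (PowerSeries.rescale x) (PowerSeries.mk_one_mul_one_sub_eq_one R)

lemma mk_neg_one_pow_mul_elemSymm (l : List R) :
    PowerSeries.mk (fun d => (-1) ^ d * elemSymm l d) =
      (l.map fun x => 1 - PowerSeries.C x * PowerSeries.X).prod := by
  induction l with
  | nil => ext n; cases n <;> simp [elemSymm, PowerSeries.coeff_one]
  | cons x l ih =>
    rw [List.map_cons, List.prod_cons, ← ih]
    ext n
    cases n with
    | zero => simp [elemSymm, sub_mul, mul_assoc]
    | succ n =>
      simp only [elemSymm, sub_mul, mul_assoc, one_mul, map_sub, PowerSeries.coeff_mk,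
        PowerSeries.coeff_C_mul, PowerSeries.coeff_succ_X_mul]
      ring

lemma mk_completeHomog_mul_mk_elemSymm (l : List R) :
    PowerSeries.mk (completeHomog l) * PowerSeries.mk (fun d => (-1) ^ d * elemSymm l d) = 1 := by
  simp [mk_completeHomog, mk_neg_one_pow_mul_elemSymm, ← List.prod_map_mul, mk_pow_mul_one_sub]

lemma sum_completeHomog_cons_mul_elemSymm (x : R) (l : List R) (d : ℕ) :
    ∑ u ∈ Finset.HasAntidiagonal.antidiagonal d,
      completeHomog (x :: l) u.1 * ((-1) ^ u.2 * elemSymm l u.2) = x ^ d := by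
  have hseries : PowerSeries.mk (completeHomog (x :: l)) *
      PowerSeries.mk (fun d => (-1) ^ d * elemSymm l d) = PowerSeries.mk (x ^ ·) := by
    rw [mk_completeHomog, List.map_cons, List.prod_cons, ← mk_completeHomog, mul_assoc,
      mk_completeHomog_mul_mk_elemSymm, mul_one]
  simpa [PowerSeries.coeff_mul] using congrArg (PowerSeries.coeff d) hseries

end CommRing

end SymmetricFunctions

section PowSpan

section CommSemiring

variable (K : Type*) {R : Type*} [CommSemiring K] [CommSemiring R] [Algebra K R]

/-- The `K`-submodule spanned by `1, x, …, x ^ (d - 1)`: the polynomials in `x` of degree less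
than `d`. -/
def powSpan (x : R) (d : ℕ) : Submodule K R :=
  Submodule.span K ((x ^ ·) '' Set.Iio d)

variable {K}

lemma pow_mem_powSpan (x : R) {c d : ℕ} (h : c < d) : x ^ c ∈ powSpan K x d :=
  Submodule.subset_span ⟨c, h, rfl⟩

lemma mul_mem_mul_toSubmodule {M : Submodule K R} {A : Subalgebra K R} {w a : R}
    (hw : w ∈ M * A.toSubmodule) (ha : a ∈ A) : w * a ∈ M * A.toSubmodule := by
  rw [← A.isIdempotentElem_toSubmodule.eq, ← mul_assoc]
  exact Submodule.mul_mem_mul hw ha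

lemma mul_mem_powSpan_mul {A : Subalgebra K R} {x : R} {d : ℕ}
    (hx : x ^ d ∈ powSpan K x d * A.toSubmodule) {w : R}
    (hw : w ∈ powSpan K x d * A.toSubmodule) : x * w ∈ powSpan K x d * A.toSubmodule := by
  have hpow (c : ℕ) (hc : c < d) : x * x ^ c ∈ powSpan K x d * A.toSubmodule := by
    rw [← pow_succ']
    obtain hlt | rfl := (Nat.succ_le_of_lt hc).lt_or_eq
    · simpa using Submodule.mul_mem_mul (pow_mem_powSpan x hlt) (A.mem_toSubmodule.2 A.one_mem)
    · exact hx
  have hle : Submodule.span K {x} * powSpan K x d ≤ powSpan K x d * A.toSubmodule := by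
    rw [powSpan, Submodule.span_mul_span, Submodule.span_le, Set.singleton_mul]
    rintro _ ⟨_, ⟨c, hc, rfl⟩, rfl⟩
    exact hpow c hc
  have hle' : Submodule.span K {x} * (powSpan K x d * A.toSubmodule) ≤
      powSpan K x d * A.toSubmodule := calc
    _ = Submodule.span K {x} * powSpan K x d * A.toSubmodule := (mul_assoc ..).symm
    _ ≤ powSpan K x d * A.toSubmodule * A.toSubmodule := mul_le_mul_left hle _
    _ = powSpan K x d * A.toSubmodule := by rw [mul_assoc, A.isIdempotentElem_toSubmodule.eq]
  exact hle' (Submodule.mul_mem_mul (Submodule.mem_span_singleton_self x) hw)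

lemma toSubmodule_adjoin_singleton_sup_le_powSpan_mul {A : Subalgebra K R} {x : R} {d : ℕ}
    (hx : x ^ d ∈ powSpan K x d * A.toSubmodule) :
    (Algebra.adjoin K {x} ⊔ A).toSubmodule ≤ powSpan K x d * A.toSubmodule := by
  have hpow (n : ℕ) : x ^ n ∈ powSpan K x d * A.toSubmodule := by
    obtain hn | hn := lt_or_ge n d
    · simpa using Submodule.mul_mem_mul (pow_mem_powSpan x hn) (A.mem_toSubmodule.2 A.one_mem)
    · induction n, hn using Nat.le_induction with
      | base => exact hx
      | succ n _ ih => rw [pow_succ']; exact mul_mem_powSpan_mul hx ih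
  rw [← Subalgebra.mul_toSubmodule, Submodule.mul_le]
  intro b hb a ha
  refine mul_mem_mul_toSubmodule ?_ ha
  rw [Algebra.adjoin_eq_span, ← Submonoid.powers_eq_closure] at hb
  refine Submodule.span_le.2 ?_ hb
  rintro _ ⟨n, rfl⟩
  exact hpow n

lemma completeHomog_cons_mem_powSpan_mul {A : Subalgebra K R} {x : R} {l : List R}
    (hl : ∀ y ∈ l, y ∈ A) {u d : ℕ} (h : u < d) :
    completeHomog (x :: l) u ∈ powSpan K x d * A.toSubmodule := by
  rw [completeHomog]
  refine sum_mem fun t ht => Submodule.mul_mem_mul (pow_mem_powSpan x ?_)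
    (completeHomog_mem hl (u - t))
  have := Finset.mem_range.1 ht
  omega

lemma prod_powSpan {ι : Type*} (s : Finset ι) (x : ι → R) (b : ι → ℕ) :
    ∏ t ∈ s, powSpan K (x t) (b t) =
      Submodule.span K {y | ∃ n : ι → ℕ, (∀ t ∈ s, n t < b t) ∧ y = ∏ t ∈ s, x t ^ n t} := by
  simp only [powSpan, Submodule.prod_span]
  congr 1
  ext y
  rw [Set.mem_finsetProd]
  constructor
  · rintro ⟨g, hg, rfl⟩
    choose! n hn hng using fun t (ht : t ∈ s) => hg ht
    exact ⟨n, hn, Finset.prod_congr rfl fun t ht => (hng t ht).symm⟩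
  · rintro ⟨n, hn, rfl⟩
    exact ⟨fun t => x t ^ n t, fun {t} ht => ⟨n t, hn t ht, rfl⟩, rfl⟩

lemma powSpan_mul_prod_powSpan_le {k : ℕ} (x : Fin k → R) (p : Fin k) (d : ℕ) (b : Fin k → ℕ) :
    powSpan K (x p) d * ∏ t : Fin k with t.val < p.val, powSpan K (x t) (b t) ≤
      Submodule.span K {y | ∃ n : Fin k → ℕ, (∀ t < p, n t < b t) ∧ n p < d ∧
        (∀ t, p < t → n t = 0) ∧ y = ∏ t, x t ^ n t} := by
  rw [prod_powSpan, powSpan, Submodule.span_mul_span]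
  refine Submodule.span_mono ?_
  rintro _ ⟨_, ⟨c, hc, rfl⟩, _, ⟨n, hn, rfl⟩, rfl⟩
  refine ⟨fun t => if t = p then c else if t < p then n t else 0, fun t ht => ?_, ?_,
    fun t ht => ?_, ?_⟩
  · simpa [ht.ne, ht] using hn t (by simpa using ht)
  · simpa using hc
  · simp [ht.ne', ht.not_gt]
  · have hfactor (t : Fin k) : x t ^ (if t = p then c else if t < p then n t else 0) =
        (if t = p then x t ^ c else 1) * if t.val < p.val then x t ^ n t else 1 := by
      obtain rfl | htp := eq_or_ne t p
      · simp
      · by_cases hlt : t < p <;> simp [htp, hlt]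
    simp only [hfactor, Finset.prod_mul_distrib, Finset.prod_ite_eq', Finset.mem_univ, if_true,
      Finset.prod_filter]

end CommSemiring

section CommRing

variable {K R : Type*} [CommRing K] [CommRing R] [Algebra K R] {A : Subalgebra K R} {x : R}
  {l : List R}

lemma completeHomog_cons_sub_pow_mem_powSpan_mul (hl : ∀ y ∈ l, y ∈ A) (d : ℕ) :
    completeHomog (x :: l) d - x ^ d ∈ powSpan K x d * A.toSubmodule := by
  rw [completeHomog, Finset.sum_range_succ, Nat.sub_self, completeHomog_zero, mul_one,
    add_sub_cancel_right]
  exact sum_mem fun t ht => Submodule.mul_mem_mul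
    (pow_mem_powSpan x (Finset.mem_range.1 ht)) (completeHomog_mem hl (d - t))

lemma pow_mem_powSpan_mul_of_completeHomog_cons_eq_zero (hl : ∀ y ∈ l, y ∈ A) {d : ℕ}
    (h : completeHomog (x :: l) d = 0) : x ^ d ∈ powSpan K x d * A.toSubmodule := by
  have hmem := completeHomog_cons_sub_pow_mem_powSpan_mul (K := K) (x := x) hl d
  rwa [h, zero_sub, neg_mem_iff] at hmem

lemma pow_add_sub_mem_powSpan_mul (hl : ∀ y ∈ l, y ∈ A) {N : ℕ}
    (h : ∀ d, N < d → completeHomog (x :: l) d = 0) (r : ℕ) :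
    x ^ (N + r) - (-1) ^ r * (x ^ N * elemSymm l r) ∈ powSpan K x N * A.toSubmodule := by
  have he (v : ℕ) : (-1) ^ v * elemSymm l v ∈ A :=
    mul_mem (pow_mem (neg_mem (one_mem A)) v) (elemSymm_mem hl v)
  have hNr : (N, r) ∈ Finset.HasAntidiagonal.antidiagonal (N + r) :=
    Finset.HasAntidiagonal.mem_antidiagonal.2 rfl
  have hsplit : x ^ (N + r) - (-1) ^ r * (x ^ N * elemSymm l r) =
      (completeHomog (x :: l) N - x ^ N) * ((-1) ^ r * elemSymm l r) +
        ∑ u ∈ (Finset.HasAntidiagonal.antidiagonal (N + r)).erase (N, r),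
          completeHomog (x :: l) u.1 * ((-1) ^ u.2 * elemSymm l u.2) := by
    rw [← sum_completeHomog_cons_mul_elemSymm x l, ← Finset.add_sum_erase _ _ hNr]
    ring
  rw [hsplit]
  refine add_mem (mul_mem_mul_toSubmodule (completeHomog_cons_sub_pow_mem_powSpan_mul hl N) (he r))
    (sum_mem fun ⟨u, v⟩ huv => ?_)
  rw [Finset.mem_erase, Finset.HasAntidiagonal.mem_antidiagonal, Ne, Prod.mk.injEq] at huv
  obtain hu | hu : u < N ∨ N < u := by omega
  · exact mul_mem_mul_toSubmodule (completeHomog_cons_mem_powSpan_mul hl hu) (he v)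
  · simp [h u hu]

end CommRing

end PowSpan

section FlagRelations

/-- The list `x_1, …, x_i` of the first `i` members of the family `x`. -/
def firstVars {R : Type*} {k : ℕ} (x : Fin k → R) (i : ℕ) : List R :=
  ((List.finRange k).take i).map x

lemma firstVars_succ_perm {R : Type*} {k : ℕ} (x : Fin k → R) (p : Fin k) :
    (firstVars x (p + 1)).Perm (x p :: firstVars x p) := by
  have hp : p.val < (List.finRange k).length := by simp
  simp [firstVars, List.take_succ_eq_append_getElem hp]

section CommSemiring

variable {K R : Type*} [CommSemiring K] [CommSemiring R] [Algebra K R] {k m : ℕ} {x : Fin k → R}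

/-- The family `x` satisfies the defining relations of `R(k,m)`. With `p = k - i` counted from
`0`, the relation `h_{m+i}(x_1, …, x_{k+1-i}) = 0` is the one for the first `p + 1` members. -/
def FlagRelations (m : ℕ) (x : Fin k → R) : Prop :=
  ∀ p : Fin k, completeHomog (firstVars x (p + 1)) (m + k - p) = 0

lemma FlagRelations.completeHomog_firstVars_eq_zero (hx : FlagRelations m x) {i : ℕ}
    (hi : i ≤ k) {d : ℕ} (hd : m + k < d + i) : completeHomog (firstVars x i) d = 0 := by
  induction i generalizing d with
  | zero =>
    obtain ⟨d, rfl⟩ := Nat.exists_eq_succ_of_ne_zero (show d ≠ 0 by omega)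
    rfl
  | succ i ih =>
    have hrel := hx ⟨i, hi⟩
    rw [completeHomog_eq_of_perm (firstVars_succ_perm x ⟨i, hi⟩)] at hrel ⊢
    exact completeHomog_cons_eq_zero_of_le hrel
      (fun e he => ih (by omega) (by dsimp only at he; omega)) (by dsimp only; omega)

lemma flagRelations_xGen (k m : ℕ) : FlagRelations m (xGen k m) := by
  intro p
  have hmem : completeHomog (firstVars MvPolynomial.X (p + 1)) (m + k - p) ∈ flagIdeal k m := by
    refine Ideal.subset_span ⟨k - p, by omega, by omega, ?_⟩
    rw [show k + 1 - (k - p) = p + 1 by omega, show m + (k - p) = m + k - p by omega, firstVars]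
  have hzero := Ideal.Quotient.eq_zero_iff_mem.2 hmem
  rwa [map_completeHomog, firstVars, List.map_map] at hzero

variable (K x) in
/-- The `K`-subalgebra generated by the first `i` members of the family `x`. -/
def firstAlgebra (i : ℕ) : Subalgebra K R :=
  Algebra.adjoin K {y | y ∈ firstVars x i}

lemma mem_firstAlgebra (i : ℕ) : ∀ y ∈ firstVars x i, y ∈ firstAlgebra K x i :=
  fun _ hy => Algebra.subset_adjoin hy

lemma firstAlgebra_succ (p : Fin k) :
    firstAlgebra K x (p + 1) = Algebra.adjoin K {x p} ⊔ firstAlgebra K x p := by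
  rw [firstAlgebra, firstAlgebra, ← Algebra.adjoin_union]
  congr 1
  ext y
  simp [(firstVars_succ_perm x p).mem_iff]

end CommSemiring

variable {K R : Type*} [CommRing K] [CommRing R] [Algebra K R] {k m : ℕ} {x : Fin k → R}

lemma FlagRelations.firstAlgebra_le_prod_powSpan (hx : FlagRelations m x) {i : ℕ} (hi : i ≤ k) :
    (firstAlgebra K x i).toSubmodule ≤
      ∏ t : Fin k with t.val < i, powSpan K (x t) (m + k - t) := by
  induction i with
  | zero => simp [firstAlgebra, firstVars, Algebra.toSubmodule_bot]
  | succ i ih =>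
    let p : Fin k := ⟨i, hi⟩
    have hrel := hx p
    rw [completeHomog_eq_of_perm (firstVars_succ_perm x p)] at hrel
    have hinsert : Finset.univ.filter (fun t : Fin k => t.val < i + 1) =
        insert p (Finset.univ.filter fun t : Fin k => t.val < i) := by
      ext t
      simp [p, Fin.ext_iff]
      omega
    calc (firstAlgebra K x (i + 1)).toSubmodule
        = (Algebra.adjoin K {x p} ⊔ firstAlgebra K x i).toSubmodule := by
          rw [← firstAlgebra_succ p]
      _ ≤ powSpan K (x p) (m + k - p) * (firstAlgebra K x i).toSubmodule :=
          toSubmodule_adjoin_singleton_sup_le_powSpan_mul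
            (pow_mem_powSpan_mul_of_completeHomog_cons_eq_zero (mem_firstAlgebra i) hrel)
      _ ≤ powSpan K (x p) (m + k - p) * ∏ t : Fin k with t.val < i, powSpan K (x t) (m + k - t) :=
          mul_le_mul_right (ih (by omega)) _
      _ = _ := by rw [hinsert, Finset.prod_insert (by simp [p])]

lemma FlagRelations.pow_add_sub_mem (hx : FlagRelations m x) (p : Fin k) (r : ℕ) :
    x p ^ (m + k - (p + 1) + r) -
        (-1) ^ r * (x p ^ (m + k - (p + 1)) * elemSymm (firstVars x p) r) ∈
      powSpan K (x p) (m + k - (p + 1)) * (firstAlgebra K x p).toSubmodule := by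
  refine pow_add_sub_mem_powSpan_mul (mem_firstAlgebra p) (fun d hd => ?_) r
  rw [← completeHomog_eq_of_perm (firstVars_succ_perm x p)]
  exact hx.completeHomog_firstVars_eq_zero p.isLt (by omega)

end FlagRelations

theorem statement6_general (K : Type*) {R : Type*} [CommRing K] [CommRing R] [Algebra K R]
    {k m : ℕ} {x : Fin k → R} (hx : FlagRelations m x) (i j : ℕ) (hj : j ≤ i) (hi1 : 1 ≤ i)
    (hik : i ≤ k) :
    x ⟨i - 1, by omega⟩ ^ (m + k - j) -
      (-1) ^ (i - j) *
        (x ⟨i - 1, by omega⟩ ^ (m + k - i) * elemSymm (firstVars x (i - 1)) (i - j)) ∈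
    Submodule.span K
      { y : R | ∃ n : Fin k → ℕ,
          (∀ t : Fin k, n t + t.val < m + k) ∧
          n ⟨i - 1, by omega⟩ + i < m + k ∧
          (∀ t : Fin k, i ≤ t.val → n t = 0) ∧
          y = ∏ t : Fin k, x t ^ n t } := by
  let p : Fin k := ⟨i - 1, by omega⟩
  have hp : p.val + 1 = i := Nat.sub_add_cancel hi1
  have hred := hx.pow_add_sub_mem (K := K) p (i - j)
  rw [hp, show m + k - i + (i - j) = m + k - j by omega] at hred
  have hspan := powSpan_mul_prod_powSpan_le (K := K) x p (m + k - i) (fun t => m + k - t.val)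
    (mul_le_mul_right (hx.firstAlgebra_le_prod_powSpan p.isLt.le) _ hred)
  refine Submodule.span_mono ?_ hspan
  rintro y ⟨n, hlow, hnp, hhigh, rfl⟩
  refine ⟨n, fun t => ?_, Nat.add_lt_of_lt_sub hnp,
    fun t ht => hhigh t (Fin.lt_def.2 (by omega)), rfl⟩
  obtain ht | rfl | ht := lt_trichotomy t p
  · exact Nat.add_lt_of_lt_sub (hlow t ht)
  · omega
  · rw [hhigh t ht]
    omega

/-- for `0 ≤ j ≤ i ≤ k` with `i ≥ 1`, the element
`x_i^{m+k-j} + x_i^{m+k-i} · e_{i-j}(x_1, …, x_{i-1})` of `R(k,m)` lies in the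
`ZMod 2`-linear span of the basis monomials `x_1^{n_1} ⋯ x_k^{n_k}`
(`0 ≤ n_t ≤ m + k - t`) having `n_i < m + k - i` and `n_ℓ = 0` for all `ℓ > i`. -/
theorem statement6 (k m : ℕ) (hk : 0 < k) (hm : 0 < m) (i j : ℕ)
    (hj : j ≤ i) (hi1 : 1 ≤ i) (hik : i ≤ k) :
    xGen k m ⟨i - 1, by omega⟩ ^ (m + k - j) +
      xGen k m ⟨i - 1, by omega⟩ ^ (m + k - i) *
        elemSymm (((List.finRange k).take (i - 1)).map (xGen k m)) (i - j) ∈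
    Submodule.span (ZMod 2)
      { y : FlagRing k m | ∃ n : Fin k → ℕ,
          (∀ t : Fin k, n t + t.val < m + k) ∧
          n ⟨i - 1, by omega⟩ + i < m + k ∧
          (∀ t : Fin k, i ≤ t.val → n t = 0) ∧
          y = ∏ t : Fin k, xGen k m t ^ n t } := by
  simpa only [firstVars, ZModModule.sub_eq_add, ZModModule.neg_eq_self, one_pow, one_mul] using
    statement6_general (ZMod 2) (flagRelations_xGen k m) i j hj hi1 hik
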